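/- arXiv:1711.07337 — 2 statements merged into one kernel-verified Lean document; each statement's English description precedes it below -/
import Mathlib

section
/- For a real parameter a > 0 and real h, ω with |h| < 1, |ω| ≤ 1 and parameter b > 1, the expansion (h² - 2hω + 1)^{-a} = Σ_{l=0}^{∞} ((a)_l/(b-1)_l) h^l C^{b-1}_l(ω) · ₂F₁(a+l, a-b+1; b+l; h²) holds, with the series converging absolutely. -/
open Finset

/-- Pochhammer (rising factorial) `(a)_k`. -/
noncomputable def poch (a : ℝ) (k : ℕ) : ℝ := ∏ i ∈ Finset.range k, (a + i)

/-- Gegenbauer polynomial `C^λ_n(z)`. -/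
noncomputable def gegenbauer (ρ : ℝ) (n : ℕ) (z : ℝ) : ℝ :=
  ∑ k ∈ Finset.range (n / 2 + 1),
    (-1 : ℝ) ^ k * Real.Gamma (ρ + n - k) /
      (Real.Gamma ρ * k.factorial * (n - 2 * k).factorial) * (2 * z) ^ (n - 2 * k)

/-- Gauss hypergeometric series `₂F₁(a, b; c; x)`. -/
noncomputable def F21 (a b c x : ℝ) : ℝ :=
  ∑' k : ℕ, poch a k * poch b k / (poch c k * k.factorial) * x ^ k


lemma poch_zero (a : ℝ) : poch a 0 = 1 := by simp [poch]

lemma poch_succ (a : ℝ) (k : ℕ) : poch a (k + 1) = poch a k * (a + k) := by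
  simp [poch, Finset.prod_range_succ]

lemma poch_pos {a : ℝ} (ha : 0 < a) (k : ℕ) : 0 < poch a k :=
  Finset.prod_pos fun i _ => by positivity

lemma poch_add (a : ℝ) (l k : ℕ) : poch a (l + k) = poch a l * poch (a + l) k := by
  induction k with
  | zero => simp [poch_zero]
  | succ k ih => rw [← add_assoc, poch_succ, poch_succ, ih]; push_cast; ring

lemma poch_one (k : ℕ) : poch 1 k = k.factorial := by
  induction k with
  | zero => simp [poch_zero]
  | succ k ih => rw [poch_succ, ih, Nat.factorial_succ]; push_cast; ring

lemma abs_poch_le (c : ℝ) (k : ℕ) : |poch c k| ≤ poch (|c| + 1) k := by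
  unfold poch
  rw [Finset.abs_prod]
  apply Finset.prod_le_prod
  · intros; positivity
  · intro i _
    have := abs_add_le c i
    rw [abs_of_nonneg (Nat.cast_nonneg (α := ℝ) i)] at this
    linarith

lemma Gamma_eq_poch {ρ : ℝ} (hρ : 0 < ρ) (k : ℕ) :
    Real.Gamma (ρ + k) = Real.Gamma ρ * poch ρ k := by
  induction k with
  | zero => simp [poch_zero]
  | succ k ih =>
    rw [poch_succ, Nat.cast_succ, ← add_assoc, Real.Gamma_add_one (by positivity), ih]; ring

/-- the three-term recurrence. -/
def GRec (a ω : ℝ) (s : ℕ → ℝ) : Prop :=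
  s 0 = 1 ∧ s 1 = 2 * a * ω ∧
    ∀ n : ℕ, (n + 2 : ℝ) * s (n + 2) = 2 * (n + 1 + a) * ω * s (n + 1) - (n + 2 * a) * s n

lemma GRec.unique {a ω : ℝ} {s t : ℕ → ℝ} (hs : GRec a ω s) (ht : GRec a ω t) : ∀ n, s n = t n := by
  have key : ∀ n, s n = t n ∧ s (n + 1) = t (n + 1) := by
    intro n
    induction n with
    | zero => exact ⟨hs.1.trans ht.1.symm, hs.2.1.trans ht.2.1.symm⟩
    | succ n ih =>
      refine ⟨ih.2, ?_⟩
      have h1 := hs.2.2 n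
      have h2 := ht.2.2 n
      rw [ih.1, ih.2, ← h2] at h1
      exact mul_left_cancel₀ (by positivity) h1
  exact fun n => (key n).1

noncomputable def gt (ρ z : ℝ) (n k : ℕ) : ℝ :=
  if 2 * k ≤ n then (-1 : ℝ) ^ k * poch ρ (n - k) / (k.factorial * (n - 2 * k).factorial) *
    (2 * z) ^ (n - 2 * k) else 0

lemma gt_add (ρ z : ℝ) (m k : ℕ) : gt ρ z (2 * k + m) k =
    (-1 : ℝ) ^ k * poch ρ (k + m) / (k.factorial * m.factorial) * (2 * z) ^ m := by
  unfold gt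
  rw [if_pos (by omega), show 2 * k + m - k = k + m by omega, show 2 * k + m - 2 * k = m by omega]

lemma gt_lt (ρ z : ℝ) {n k : ℕ} (h : n < 2 * k) : gt ρ z n k = 0 := by
  unfold gt
  rw [if_neg (by omega)]

lemma gegenbauer_eq {ρ : ℝ} (hρ : 0 < ρ) (n : ℕ) (z : ℝ) (N : ℕ) (hN : n < 2 * N) :
    gegenbauer ρ n z = ∑ k ∈ range N, gt ρ z n k := by
  have h1 : gegenbauer ρ n z = ∑ k ∈ range (n / 2 + 1), gt ρ z n k := by
    unfold gegenbauer
    apply Finset.sum_congr rfl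
    intro k hk
    have hk' : 2 * k ≤ n := by have := Finset.mem_range.1 hk; omega
    obtain ⟨m, rfl⟩ := Nat.exists_eq_add_of_le hk'
    rw [gt_add, show 2 * k + m - 2 * k = m by omega,
      show ρ + ((2 * k + m : ℕ) : ℝ) - k = ρ + (k + m : ℕ) by push_cast; ring, Gamma_eq_poch hρ]
    have := (Real.Gamma_pos_of_pos hρ).ne'
    field_simp
  rw [h1]
  apply Finset.sum_subset
  · intro k hk
    simp only [Finset.mem_range] at *
    omega
  · intro k _ hk
    simp only [Finset.mem_range] at *
    exact gt_lt _ _ (by omega)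

lemma gt_rec0 (ρ z : ℝ) (n : ℕ) :
    (n + 2 : ℝ) * gt ρ z (n + 2) 0 = 2 * (n + 1 + ρ) * z * gt ρ z (n + 1) 0 := by
  have h1 := gt_add ρ z (n + 2) 0
  have h2 := gt_add ρ z (n + 1) 0
  simp only [mul_zero, zero_add] at h1 h2
  rw [h1, h2, poch_succ ρ (n + 1), Nat.factorial_succ (n + 1), pow_succ]
  push_cast
  field_simp
  ring

lemma gt_rec1 (ρ z : ℝ) (n k : ℕ) :
    (n + 2 : ℝ) * gt ρ z (n + 2) (k + 1) =
      2 * (n + 1 + ρ) * z * gt ρ z (n + 1) (k + 1) - (n + 2 * ρ) * gt ρ z n k := by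
  rcases lt_trichotomy n (2 * k) with h | h | h
  · rw [gt_lt _ _ (by omega), gt_lt _ _ (by omega), gt_lt _ _ h]; ring
  · subst h
    have h1 := gt_add ρ z 0 (k + 1)
    have h3 := gt_add ρ z 0 k
    rw [show 2 * k + 2 = 2 * (k + 1) + 0 by ring, h1, gt_lt _ _ (by omega)]
    simp only [add_zero] at h3 ⊢
    rw [h3, poch_succ, Nat.factorial_succ, pow_succ]
    push_cast
    field_simp
    ring
  · obtain ⟨m, rfl⟩ := Nat.exists_eq_add_of_lt h
    have h1 := gt_add ρ z (m + 1) (k + 1)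
    have h2 := gt_add ρ z m (k + 1)
    have h3 := gt_add ρ z (m + 1) k
    rw [show 2 * k + m + 1 + 2 = 2 * (k + 1) + (m + 1) by ring, h1,
      show 2 * k + m + 1 + 1 = 2 * (k + 1) + m by ring, h2,
      show 2 * k + m + 1 = 2 * k + (m + 1) by ring, h3,
      show k + 1 + (m + 1) = k + m + 1 + 1 by ring, show k + 1 + m = k + m + 1 by ring,
      show k + (m + 1) = k + m + 1 by ring,
      poch_succ ρ (k + m + 1), Nat.factorial_succ k, Nat.factorial_succ m, pow_succ, pow_succ]
    push_cast
    field_simp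
    ring

lemma gegenbauer_rec {ρ : ℝ} (hρ : 0 < ρ) (z : ℝ) : GRec ρ z (fun n => gegenbauer ρ n z) := by
  refine ⟨?_, ?_, ?_⟩
  · simp only []
    rw [gegenbauer_eq hρ 0 z 1 (by omega)]
    simp [gt, poch_zero]
  · simp only []
    rw [gegenbauer_eq hρ 1 z 1 (by omega)]
    simp [gt, poch_zero, poch_succ]
    ring
  · intro n
    simp only []
    rw [gegenbauer_eq hρ (n + 2) z (n + 1 + 1) (by omega),
      gegenbauer_eq hρ (n + 1) z (n + 1 + 1) (by omega), gegenbauer_eq hρ n z (n + 1) (by omega),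
      Finset.sum_range_succ', Finset.sum_range_succ' _ (n + 1), mul_add, mul_add, gt_rec0,
      Finset.mul_sum, Finset.mul_sum, Finset.mul_sum, Finset.sum_congr rfl
        (fun k _ => gt_rec1 ρ z n k), Finset.sum_sub_distrib]
    ring

/-- connection coefficients -/
noncomputable def D (a c : ℝ) (l k : ℕ) : ℝ :=
  poch a (l + k) * poch (a - c) k * (c + l) / (poch c (l + k + 1) * k.factorial)

noncomputable def E (a c : ℝ) (n l : ℕ) : ℝ :=
  if l ≤ n ∧ (n - l) % 2 = 0 then D a c l ((n - l) / 2) else 0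

lemma E_add (a c : ℝ) (l k : ℕ) : E a c (l + 2 * k) l = D a c l k := by
  unfold E
  rw [if_pos (by omega), show (l + 2 * k - l) / 2 = k by omega]

lemma E_zero (a c : ℝ) {n l : ℕ} (h : ∀ k, n ≠ l + 2 * k) : E a c n l = 0 := by
  unfold E
  rw [if_neg]
  intro h1
  exact h ((n - l) / 2) (by omega)

lemma E_rec0 (a : ℝ) {c : ℝ} (hc : 0 < c) (n : ℕ) :
    (n + 2 : ℝ) * E a c (n + 2) 0 = (n + 1 + a) * (E a c (n + 1) 1 / (1 + c) * (2 * c))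
      - (n + 2 * a) * E a c n 0 := by
  by_cases h : ∃ k, n = 2 * k
  · obtain ⟨k, rfl⟩ := h
    have h1 := E_add a c 0 (k + 1)
    have h2 := E_add a c 1 k
    have h3 := E_add a c 0 k
    rw [show 0 + 2 * (k + 1) = 2 * k + 2 by ring] at h1
    rw [add_comm] at h2
    rw [zero_add] at h3
    rw [h1, h2, h3]
    unfold D
    rw [zero_add, zero_add, add_comm 1 k, poch_succ c (k + 1), poch_succ c k, poch_succ, poch_succ,
      Nat.factorial_succ]
    have := poch_pos hc k
    push_cast
    field_simp
    ring
  · push Not at h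
    rw [E_zero, E_zero, E_zero]
    · ring
    · intro k; have := h k; omega
    · intro k; have := h k; omega
    · intro k; have := h (k - 1); omega

lemma E_rec1 (a : ℝ) {c : ℝ} (hc : 0 < c) (n l : ℕ) :
    (n + 2 : ℝ) * E a c (n + 2) (l + 1) = (n + 1 + a) * (E a c (n + 1) l / (l + c) * (l + 1) +
      E a c (n + 1) (l + 2) / (l + 2 + c) * (l + 1 + 2 * c))
      - (n + 2 * a) * E a c n (l + 1) := by
  by_cases h : ∃ k, n + 1 = l + 2 * k
  · obtain ⟨k, hk⟩ := h
    have h1 := E_add a c (l + 1) k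
    have h2 := E_add a c l k
    rw [← hk] at h2
    rw [show l + 1 + 2 * k = n + 2 by omega] at h1
    rw [h1, h2]
    have hn : (n : ℝ) = l + 2 * k - 1 := by
      have : ((n + 1 : ℕ) : ℝ) = (l + 2 * k : ℕ) := by rw [hk]
      push_cast at this; linarith
    rcases k with _ | j
    · rw [E_zero, E_zero, hn]
      · unfold D
        simp only [add_zero]
        rw [poch_succ c (l + 1), poch_succ c l, poch_succ]
        have := poch_pos hc l
        push_cast
        field_simp
        ring
      · intro k; omega
      · intro k; omega
    · have h3 := E_add a c (l + 2) j
      have h4 := E_add a c (l + 1) j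
      rw [show l + 2 + 2 * j = n + 1 by omega] at h3
      rw [show l + 1 + 2 * j = n by omega] at h4
      rw [h3, h4, hn]
      unfold D
      rw [show l + 1 + (j + 1) = l + j + 1 + 1 by ring, show l + (j + 1) = l + j + 1 by ring,
        show l + 2 + j = l + j + 1 + 1 by ring, show l + 1 + j = l + j + 1 by ring,
        poch_succ c (l + j + 1 + 1), poch_succ c (l + j + 1), poch_succ c (l + j),
        poch_succ a (l + j + 1), poch_succ (a - c), Nat.factorial_succ]
      have := poch_pos hc (l + j)
      push_cast
      field_simp
      ring
  · push Not at h
    rw [E_zero, E_zero, E_zero, E_zero]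
    · ring
    · intro k; have := h (k + 1); omega
    · intro k; have := h (k + 1); omega
    · intro k; have := h k; omega
    · intro k; have := h k; omega

lemma shift_sum {c ω : ℝ} {C : ℕ → ℝ} (hC : GRec c ω C) (W : ℕ → ℝ) (N : ℕ) :
    2 * ω * ∑ l ∈ range (N + 1), W l * (l + c) * C l =
      ∑ l ∈ range (N + 1), W l * (l + 1) * C (l + 1) +
      ∑ l ∈ range N, W (l + 1) * (l + 2 * c) * C l := by
  induction N with
  | zero => simp [hC.1, hC.2.1]; ring
  | succ N ih =>
    rw [Finset.sum_range_succ, mul_add, ih, Finset.sum_range_succ _ (N + 1),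
      Finset.sum_range_succ (fun l : ℕ => W (l + 1) * (l + 2 * c) * C l) N]
    have := hC.2.2 N
    push_cast
    linear_combination (-W (N + 1)) * this

lemma S_rec (a : ℝ) {c ω : ℝ} (hc : 0 < c) {C : ℕ → ℝ} (hC : GRec c ω C) :
    GRec a ω (fun n => ∑ l ∈ range (n + 1), E a c n l * C l) := by
  have hE : ∀ {n l : ℕ}, n < l → E a c n l = 0 := fun h => E_zero a c (by intro k; omega)
  refine ⟨?_, ?_, ?_⟩
  · have := E_add a c 0 0
    simp only [mul_zero, add_zero] at this
    simp [this, hC.1, D, poch_zero, poch_succ, hc.ne']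
  · have h1 := E_add a c 1 0
    simp only [mul_zero, add_zero] at h1
    have h0 : E a c 1 0 = 0 := E_zero a c (by intro k; omega)
    simp [Finset.sum_range_succ, h1, h0, hC.2.1, D, poch_zero, poch_succ]
    field_simp
  · intro n
    simp only []
    have hs := shift_sum hC (fun l => E a c (n + 1) l / (l + c)) (n + 1)
    have hs1 : ∀ l : ℕ, E a c (n + 1) l / (l + c) * (l + c) = E a c (n + 1) l := by
      intro l; field_simp
    simp only [hs1] at hs
    have e1 : ∑ l ∈ range (n + 1), E a c (n + 1) (l + 1) / ((l + 1 : ℕ) + c) * (l + 2 * c) * C l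
      = E a c (n + 1) 1 / (1 + c) * (2 * c) * C 0 + ∑ l ∈ range (n + 2),
        E a c (n + 1) (l + 2) / (l + 2 + c) * (l + 1 + 2 * c) * C (l + 1) := by
      rw [Finset.sum_range_succ', Finset.sum_range_succ, Finset.sum_range_succ,
        hE (show n + 1 < n + 2 by omega), hE (show n + 1 < n + 1 + 2 by omega)]
      push_cast
      simp only [zero_add, zero_div, zero_mul, add_zero]
      rw [add_comm]
      congr 1
      apply Finset.sum_congr rfl
      intro l _
      ring_nf
    have e2 : ∑ l ∈ range (n + 1), E a c n l * C l
      = E a c n 0 * C 0 + ∑ l ∈ range (n + 2), E a c n (l + 1) * C (l + 1) := by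
      rw [Finset.sum_range_succ', Finset.sum_range_succ, Finset.sum_range_succ,
        hE (show n < n + 1 by omega), hE (show n < n + 1 + 1 by omega)]
      ring
    rw [e1] at hs
    rw [Finset.sum_range_succ', mul_add, E_rec0 a hc |> fun h => show (n + 2 : ℝ) *
      (E a c (n + 2) 0 * C 0) = ((n + 1 + a) * (E a c (n + 1) 1 / (1 + c) * (2 * c))
      - (n + 2 * a) * E a c n 0) * C 0 by rw [← mul_assoc, h], e2, Finset.mul_sum]
    have e3 : ∀ l ∈ range (n + 2), (n + 2 : ℝ) * (E a c (n + 2) (l + 1) * C (l + 1)) =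
      (n + 1 + a) * (E a c (n + 1) l / (l + c) * (l + 1) * C (l + 1)) + (n + 1 + a) *
      (E a c (n + 1) (l + 2) / (l + 2 + c) * (l + 1 + 2 * c) * C (l + 1))
      - (n + 2 * a) * (E a c n (l + 1) * C (l + 1)) := by
      intro l _
      rw [← mul_assoc, E_rec1 a hc]; ring
    rw [Finset.sum_congr rfl e3, Finset.sum_sub_distrib, Finset.sum_add_distrib, ← Finset.mul_sum,
      ← Finset.mul_sum, ← Finset.mul_sum]
    linear_combination (-(n + 1 + a)) * hs

open Filter Topology

lemma summable_ratio {c d r : ℝ} (hc : 0 < c) (hd : 0 < d) (hr0 : 0 ≤ r) (hr : r < 1) :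
    Summable (fun n : ℕ => poch c n / poch d n * r ^ n) := by
  rcases hr0.eq_or_lt with h | h
  · subst h
    apply summable_of_ne_finset_zero (s := {0})
    intro n hn
    simp at hn
    simp [hn]
  refine summable_of_ratio_test_tendsto_lt_one hr (Eventually.of_forall fun n => ?_) ?_
  · have := poch_pos hc n
    have := poch_pos hd n
    positivity
  · have h1 : ∀ n : ℕ, ‖poch c (n + 1) / poch d (n + 1) * r ^ (n + 1)‖ /
        ‖poch c n / poch d n * r ^ n‖ = (c + n) / (d + n) * r := by
      intro n
      have := poch_pos hc n
      have := poch_pos hd n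
      have := poch_pos hc (n + 1)
      have := poch_pos hd (n + 1)
      rw [Real.norm_of_nonneg (by positivity), Real.norm_of_nonneg (by positivity), poch_succ,
        poch_succ, pow_succ]
      field_simp
    simp only [h1]
    have h2 : Tendsto (fun n : ℕ => (c + n : ℝ) / (d + n)) atTop (𝓝 1) := by
      have h3 : Tendsto (fun n : ℕ => (d + n : ℝ)) atTop atTop :=
        tendsto_atTop_add_const_left _ _ tendsto_natCast_atTop_atTop
      have h4 : Tendsto (fun n : ℕ => 1 + (c - d) / (d + n : ℝ)) atTop (𝓝 (1 + 0)) :=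
        tendsto_const_nhds.add (h3.const_div_atTop _)
      rw [add_zero] at h4
      refine h4.congr fun n => ?_
      field_simp
      ring
    simpa using h2.mul_const r

noncomputable def u (a : ℝ) (n : ℕ) : ℝ := poch a n / n.factorial

lemma u_zero (a : ℝ) : u a 0 = 1 := by simp [u, poch_zero]

lemma u_nonneg {a : ℝ} (ha : 0 < a) (n : ℕ) : 0 ≤ u a n := by
  have := poch_pos ha n
  unfold u; positivity

lemma u_succ (a : ℝ) (n : ℕ) : (n + 1 : ℝ) * u a (n + 1) = (a + n) * u a n := by
  unfold u
  rw [poch_succ, Nat.factorial_succ]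
  push_cast
  field_simp

lemma summable_u {a r : ℝ} (ha : 0 < a) (hr0 : 0 ≤ r) (hr : r < 1) :
    Summable (fun n : ℕ => u a n * r ^ n) := by
  have := summable_ratio ha one_pos hr0 hr
  simpa only [poch_one, u] using this

lemma summable_norm_u {a : ℝ} (ha : 0 < a) {x : ℂ} (hx : ‖x‖ < 1) :
    Summable (fun n : ℕ => ‖(u a n : ℂ) * x ^ n‖) := by
  refine (summable_u ha (norm_nonneg x) hx).congr fun n => ?_
  rw [norm_mul, norm_pow, Complex.norm_real, Real.norm_of_nonneg (u_nonneg ha n)]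

lemma choose_neg_eq (a : ℝ) (n : ℕ) :
    Ring.choose (-(a : ℂ)) n = (-1) ^ n * (u a n : ℂ) := by
  have h : ∀ n, (descPochhammer ℤ n).smeval (-(a : ℂ)) = (-1) ^ n * (poch a n : ℂ) := by
    intro n
    induction n with
    | zero => simp [poch_zero]
    | succ n ih =>
      rw [descPochhammer_succ_right, Polynomial.smeval_mul, ih, poch_succ]
      simp [Polynomial.smeval_natCast, Polynomial.smeval_sub, Polynomial.smeval_X]
      ring
  rw [Ring.choose_eq_smul, h]
  unfold u
  simp
  field_simp

lemma hasSum_u (a : ℝ) {x : ℂ} (hx : ‖x‖ < 1) :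
    HasSum (fun n : ℕ => (u a n : ℂ) * x ^ n) ((1 - x) ^ (-(a : ℂ))) := by
  have h := (Complex.one_add_cpow_hasFPowerSeriesOnBall_zero (a := -(a : ℂ))).hasSum (y := -x) (by
    rw [← ENNReal.ofReal_one, Metric.eball_ofReal]
    simpa using hx)
  simp only [binomialSeries_apply, choose_neg_eq] at h
  rw [zero_add, ← sub_eq_add_neg] at h
  suffices e : (fun n : ℕ => (u a n : ℂ) * x ^ n) = fun n : ℕ =>
      ((-1) ^ n * (u a n : ℂ)) • (List.ofFn fun _ : Fin n => -x).prod by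
    rw [e]; exact h
  funext n
  simp
  rw [neg_pow x n]
  have : ((-1 : ℂ) ^ n) * (-1) ^ n = 1 := by rw [← mul_pow]; simp
  linear_combination (-(u a n : ℂ) * x ^ n) * this

open PowerSeries in
lemma series_ode (a : ℝ) (z : ℂ) :
    (1 - C z * X) * d⁄dX ℂ (PowerSeries.mk fun n => (u a n : ℂ) * z ^ n) =
      C (a * z) * PowerSeries.mk fun n => (u a n : ℂ) * z ^ n := by
  ext n
  have hu : ∀ n : ℕ, (n + 1 : ℂ) * u a (n + 1) = (a + n) * u a n := by
    intro n; exact_mod_cast u_succ a n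
  rw [sub_mul, one_mul, mul_assoc, map_sub, coeff_C_mul, coeff_C_mul, coeff_derivative]
  rcases n with _ | n
  · have := hu 0
    simp at this
    simp [this]
    ring
  · rw [coeff_succ_X_mul, coeff_derivative]
    have := hu (n + 1)
    simp only [coeff_mk]
    push_cast at this ⊢
    rw [pow_succ]
    linear_combination z ^ (n + 1) * z * this

noncomputable def P (a : ℝ) (z w : ℂ) (n : ℕ) : ℂ :=
  ∑ kl ∈ antidiagonal n, ((u a kl.1 : ℂ) * z ^ kl.1) * ((u a kl.2 : ℂ) * w ^ kl.2)

open PowerSeries in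
lemma P_rec (a : ℝ) {z w y : ℂ} (hzw : z * w = 1) (hy : z + w = 2 * y) (n : ℕ) :
    (n + 2 : ℂ) * P a z w (n + 2) = 2 * (n + 1 + a) * y * P a z w (n + 1)
      - (n + 2 * a) * P a z w n := by
  set A := PowerSeries.mk fun n => (u a n : ℂ) * z ^ n with hA
  set B := PowerSeries.mk fun n => (u a n : ℂ) * w ^ n with hB
  have hP : ∀ n, P a z w n = coeff n (A * B) := by
    intro n
    rw [PowerSeries.coeff_mul]
    simp [P, hA, hB]
  have h1 := series_ode a z
  have h2 := series_ode a w
  rw [← hA] at h1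
  rw [← hB] at h2
  have hzw' : (C z * C w : PowerSeries ℂ) = 1 := by rw [← map_mul, hzw, map_one]
  have hy' : (C z + C w : PowerSeries ℂ) = 2 * C y := by
    rw [← map_add, hy, map_mul, map_ofNat]
  have h3 : d⁄dX ℂ (A * B) - C (2 * y) * (X * d⁄dX ℂ (A * B)) + X * (X * d⁄dX ℂ (A * B)) =
      C (2 * (a : ℂ) * y) * (A * B) - C (2 * (a : ℂ)) * (X * (A * B)) := by
    have : d⁄dX ℂ (A * B) = A * d⁄dX ℂ B + B * d⁄dX ℂ A := by
      rw [Derivation.leibniz]; simp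
    rw [this]
    simp only [map_mul] at h1 h2 ⊢
    have e2 : (C (2 : ℂ) : PowerSeries ℂ) = 2 := map_ofNat _ 2
    rw [e2]
    linear_combination (B * (1 - C w * X)) * h1 + (A * (1 - C z * X)) * h2 +
      (-(X * X * (A * d⁄dX ℂ B + B * d⁄dX ℂ A)) - 2 * C (a : ℂ) * X * A * B) * hzw' +
      (X * (A * d⁄dX ℂ B + B * d⁄dX ℂ A) + C (a : ℂ) * A * B) * hy'
  have h4 := congrArg (coeff (n + 1)) h3
  simp only [map_add, map_sub, coeff_C_mul, coeff_succ_X_mul, coeff_derivative] at h4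
  rw [← hP, ← hP, ← hP] at h4
  have h5 : coeff n (X * d⁄dX ℂ (A * B)) = n * P a z w n := by
    rcases n with _ | n
    · simp
    · rw [coeff_succ_X_mul, coeff_derivative, hP]; push_cast; ring
  rw [h5] at h4
  push_cast at h4
  linear_combination h4

lemma P_eq {a ω : ℝ} {z w : ℂ} (hzw : z * w = 1) (hy : z + w = 2 * (ω : ℂ)) {s : ℕ → ℝ}
    (hs : GRec a ω s) : ∀ n, (s n : ℂ) = P a z w n := by
  have key : ∀ n, (s n : ℂ) = P a z w n ∧ (s (n + 1) : ℂ) = P a z w (n + 1) := by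
    intro n
    induction n with
    | zero =>
      constructor
      · simp [hs.1, P, u_zero]
      · have := u_succ a 0
        simp [u_zero] at this
        simp [hs.2.1, P, Finset.Nat.antidiagonal_succ, u_zero, this]
        linear_combination (-(a : ℂ)) * hy
    | succ n ih =>
      refine ⟨ih.2, ?_⟩
      have h1 : ((n + 2 : ℝ) * s (n + 2) : ℂ) = 2 * (n + 1 + a) * ω * s (n + 1)
        - (n + 2 * a) * s n := by exact_mod_cast hs.2.2 n
      have h2 := P_rec a hzw hy n
      rw [ih.1, ih.2, ← h2] at h1
      push_cast at h1
      have : (n + 2 : ℂ) ≠ 0 := by exact_mod_cast (by omega : n + 2 ≠ 0)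
      exact mul_left_cancel₀ this h1
  exact fun n => (key n).1

lemma gen_fun {a ω h : ℝ} (ha : 0 < a) (hω : |ω| ≤ 1) (hh : |h| < 1) {s : ℕ → ℝ}
    (hs : GRec a ω s) : Summable (fun n => |s n| * |h| ^ n) ∧
      HasSum (fun n => s n * h ^ n) ((h ^ 2 - 2 * h * ω + 1) ^ (-a)) := by
  set z : ℂ := ⟨ω, Real.sqrt (1 - ω ^ 2)⟩ with hz
  have hω2 : ω ^ 2 ≤ 1 := by rw [← sq_abs]; exact pow_le_one₀ (abs_nonneg _) hω
  have hsq : Real.sqrt (1 - ω ^ 2) ^ 2 = 1 - ω ^ 2 := Real.sq_sqrt (by linarith)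
  set w : ℂ := (starRingEnd ℂ) z with hw
  have hns : Complex.normSq z = 1 := by
    rw [Complex.normSq_apply, hz]; simp only []; nlinarith
  have hzw : z * w = 1 := by rw [hw, Complex.mul_conj, hns]; simp
  have hzn : ‖z‖ = 1 := by rw [Complex.norm_def, hns, Real.sqrt_one]
  have hwn : ‖w‖ = 1 := by rw [hw, Complex.norm_conj, hzn]
  have hy : z + w = 2 * (ω : ℂ) := by rw [hw, Complex.add_conj, hz]; push_cast; ring
  have hP := P_eq hzw hy hs
  have hx1 : ‖z * h‖ < 1 := by rw [norm_mul, hzn, one_mul, Complex.norm_real]; exact hh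
  have hx2 : ‖w * h‖ < 1 := by rw [norm_mul, hwn, one_mul, Complex.norm_real]; exact hh
  have hterm : ∀ n, ∑ kl ∈ antidiagonal n, ((u a kl.1 : ℂ) * (z * h) ^ kl.1) *
      ((u a kl.2 : ℂ) * (w * h) ^ kl.2) = ((s n * h ^ n : ℝ) : ℂ) := by
    intro n
    rw [Complex.ofReal_mul, hP, P, Finset.sum_mul]
    apply Finset.sum_congr rfl
    intro kl hkl
    rw [← Finset.HasAntidiagonal.mem_antidiagonal.1 hkl]
    push_cast
    ring
  have S1 := summable_norm_sum_mul_antidiagonal_of_summable_norm (summable_norm_u ha hx1)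
    (summable_norm_u ha hx2)
  have T1 := tsum_mul_tsum_eq_tsum_sum_antidiagonal_of_summable_norm (summable_norm_u ha hx1)
    (summable_norm_u ha hx2)
  simp only [hterm] at S1 T1
  have S2 : Summable (fun n => |s n| * |h| ^ n) := by
    refine S1.congr fun n => ?_
    rw [Complex.norm_real, Real.norm_eq_abs, abs_mul, abs_pow]
  refine ⟨S2, ?_⟩
  have S3 : Summable (fun n => s n * h ^ n) := by
    apply Summable.of_norm
    refine S2.congr fun n => ?_
    rw [Real.norm_eq_abs, abs_mul, abs_pow]
  rw [S3.hasSum_iff, ← Complex.ofReal_inj, Complex.ofReal_tsum, ← T1, (hasSum_u a hx1).tsum_eq,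
    (hasSum_u a hx2).tsum_eq]
  have hne : (1 - z * h).arg ≠ Real.pi := by
    have : 1 - z * h ∈ Complex.slitPlane := by
      have := Complex.mem_slitPlane_of_norm_lt_one (z := -(z * h)) (by simpa using hx1)
      simpa [sub_eq_add_neg] using this
    exact Complex.slitPlane_arg_ne_pi this
  have e1 : (1 - w * h) = (starRingEnd ℂ) (1 - z * h) := by simp [hw]
  have e2 : (1 - w * h) ^ (-(a : ℂ)) = (starRingEnd ℂ) ((1 - z * h) ^ (-(a : ℂ))) := by
    rw [e1, Complex.conj_cpow _ _ hne]
    simp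
  rw [e2, Complex.mul_conj, Complex.normSq_eq_norm_sq]
  congr 1
  rw [← Complex.ofReal_neg, Complex.norm_cpow_real, ← Real.rpow_natCast, ← Real.rpow_mul (norm_nonneg _),
    mul_comm (-a), Real.rpow_mul (norm_nonneg _), Real.rpow_natCast, ← Complex.normSq_eq_norm_sq,
    Complex.normSq_apply]
  congr 1
  simp [hz]
  linear_combination h ^ 2 * hsq

lemma D_bound {a c : ℝ} (ha : 0 < a) (hc : 0 < c) (l k : ℕ) :
    |D a c l k| ≤ poch a (l + k) / poch c (l + k) * u (|a - c| + 1) k := by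
  have h1 := poch_pos ha (l + k)
  have h2 := poch_pos hc (l + k)
  have h3 := abs_poch_le (a - c) k
  have e : D a c l k = poch a (l + k) / poch c (l + k) * (poch (a - c) k / k.factorial) *
      ((c + l) / (c + l + k)) := by
    unfold D
    rw [poch_succ]
    push_cast
    rw [← add_assoc]
    field_simp
  have h4 : (c + l) / (c + l + k) ≤ 1 := by
    rw [div_le_one (by positivity)]
    have : (0 : ℝ) ≤ k := by positivity
    linarith
  have h5 : 0 ≤ (c + l) / (c + l + k) := by positivity
  rw [e, abs_mul, abs_mul, abs_div, abs_div, abs_of_pos h1, abs_of_pos h2, Nat.abs_cast,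
    abs_of_nonneg h5]
  unfold u
  calc _ ≤ poch a (l + k) / poch c (l + k) * (|poch (a - c) k| / k.factorial) * 1 := by gcongr
    _ ≤ _ := by rw [mul_one]; gcongr

lemma term_eq {a b : ℝ} (hb : 1 < b) (h G : ℝ) (l k : ℕ) :
    poch a l / poch (b - 1) l * h ^ l * G *
      (poch (a + l) k * poch (a - b + 1) k / (poch (b + l) k * k.factorial) * (h ^ 2) ^ k) =
    D a (b - 1) l k * G * h ^ (l + 2 * k) := by
  have hc : 0 < b - 1 := by linarith
  have h1 := poch_pos hc l
  have h2 : 0 < poch (b + l) k := poch_pos (by positivity) k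
  have e : poch (b - 1) (l + k + 1) = poch (b - 1) l * (b - 1 + l) * poch (b + l) k := by
    rw [show l + k + 1 = (l + 1) + k by ring, poch_add, poch_succ]
    congr 2
    push_cast; ring
  have h3 : 0 < b - 1 + l := by positivity
  unfold D
  rw [e, poch_add a l k, show a - (b - 1) = a - b + 1 by ring, pow_add, pow_mul]
  field_simp

lemma double_summable {a c ω h : ℝ} (ha : 0 < a) (hc : 0 < c) (hω : |ω| ≤ 1) (hh : |h| < 1)
    {s : ℕ → ℝ} (hs : GRec c ω s) :
    Summable (fun p : ℕ × ℕ => D a c p.1 p.2 * s p.1 * h ^ (p.1 + 2 * p.2)) := by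
  obtain ⟨t, ht1, ht2⟩ := exists_between hh
  have ht0 : 0 < t := lt_of_le_of_lt (abs_nonneg h) ht1
  have hq := summable_ratio ha hc ht0.le ht2
  obtain ⟨M, hM⟩ : ∃ M, ∀ n, poch a n / poch c n * t ^ n ≤ M := by
    refine ⟨∑' n, poch a n / poch c n * t ^ n, fun n => hq.le_tsum n fun j _ => ?_⟩
    have := poch_pos ha j
    have := poch_pos hc j
    positivity
  have hr1 : |h| / t < 1 := (div_lt_one ht0).2 ht1
  have hr0 : 0 ≤ |h| / t := by positivity
  have A1 := (gen_fun (h := |h| / t) hc hω (by rwa [abs_of_nonneg hr0]) hs).1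
  rw [abs_of_nonneg hr0] at A1
  have A2 := summable_u (a := |a - c| + 1) (r := |h| * (|h| / t)) (by positivity) (by positivity)
    (by nlinarith [abs_nonneg h])
  have A3 := (A1.mul_of_nonneg A2 (fun n => by positivity) (fun n => by
    have := u_nonneg (a := |a - c| + 1) (by positivity) n
    simp only [Pi.zero_apply]
    positivity)).mul_left M
  refine Summable.of_norm_bounded A3 ?_
  rintro ⟨l, k⟩
  simp only [Real.norm_eq_abs]
  rw [abs_mul, abs_mul, abs_pow]
  have hu := u_nonneg (a := |a - c| + 1) (by positivity) k
  calc |D a c l k| * |s l| * |h| ^ (l + 2 * k)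
      ≤ (poch a (l + k) / poch c (l + k) * u (|a - c| + 1) k) * |s l| * |h| ^ (l + 2 * k) := by
        gcongr; exact D_bound ha hc l k
    _ = (poch a (l + k) / poch c (l + k) * t ^ (l + k)) * (|s l| * (|h| / t) ^ l *
          (u (|a - c| + 1) k * (|h| * (|h| / t)) ^ k)) := by
        rw [mul_pow, div_pow, div_pow]
        field_simp
        ring
    _ ≤ M * (|s l| * (|h| / t) ^ l * (u (|a - c| + 1) k * (|h| * (|h| / t)) ^ k)) := by
        gcongr; exact hM _

theorem stmt5 (a b h ω : ℝ) (ha : 0 < a) (hb : 1 < b) (hh : |h| < 1) (hω : |ω| ≤ 1) :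
    Summable (fun l : ℕ =>
        |poch a l / poch (b - 1) l * h ^ l * gegenbauer (b - 1) l ω *
          F21 (a + l) (a - b + 1) (b + l) (h ^ 2)|) ∧
      (h ^ 2 - 2 * h * ω + 1) ^ (-a) =
        ∑' l : ℕ, poch a l / poch (b - 1) l * h ^ l * gegenbauer (b - 1) l ω *
          F21 (a + l) (a - b + 1) (b + l) (h ^ 2) := by
  have hc : 0 < b - 1 := by linarith
  have hG := gegenbauer_rec hc ω
  have hT := double_summable (h := h) ha hc hω hh hG
  set G : ℕ → ℝ := fun n => gegenbauer (b - 1) n ω with hGdef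
  have hterm : ∀ l : ℕ, poch a l / poch (b - 1) l * h ^ l * gegenbauer (b - 1) l ω *
      F21 (a + l) (a - b + 1) (b + l) (h ^ 2) =
      ∑' k : ℕ, D a (b - 1) l k * G l * h ^ (l + 2 * k) := by
    intro l
    unfold F21
    rw [← tsum_mul_left]
    exact tsum_congr fun k => term_eq hb h _ l k
  simp only [hterm]
  refine ⟨?_, ?_⟩
  · have h1 := hT.abs
    refine Summable.of_nonneg_of_le (fun l => abs_nonneg _) (fun l => ?_) h1.prod
    have := norm_tsum_le_tsum_norm (f := fun k => D a (b - 1) l k * G l * h ^ (l + 2 * k))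
      (h1.prod_factor l)
    simpa only [Real.norm_eq_abs] using this
  · rw [← hT.tsum_prod]
    have hS := (gen_fun ha hω hh (S_rec a hc hG)).2
    have hinj : Function.Injective (fun p : ℕ × ℕ => (p.1 + 2 * p.2, p.1)) := by
      rintro ⟨l, k⟩ ⟨l', k'⟩ hp
      simp only [Prod.mk.injEq] at hp ⊢
      omega
    have hsum := hT.hasSum
    have h2 : HasSum (fun q : ℕ × ℕ => E a (b - 1) q.1 q.2 * G q.2 * h ^ q.1)
        (∑' p : ℕ × ℕ, D a (b - 1) p.1 p.2 * G p.1 * h ^ (p.1 + 2 * p.2)) := by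
      rw [← hinj.hasSum_iff]
      · simpa only [Function.comp_def, E_add] using hsum
      · rintro ⟨n, l⟩ hq
        rw [E_zero]
        · simp
        · intro k hk
          exact hq ⟨(l, k), by simp at hk ⊢; omega⟩
    have h3 := h2.prod_fiberwise (g := fun n => (∑ l ∈ range (n + 1), E a (b - 1) n l * G l) * h ^ n)
      (fun n => by
        rw [Finset.sum_mul]
        apply hasSum_sum_of_ne_finset_zero
        intro l hl
        rw [E_zero]
        · simp
        · intro k hk
          apply hl
          rw [Finset.mem_range]
          omega)
    exact hS.unique h3
end

section
/- For λ > 0 and nonnegative integers m, n, the Gegenbauer polynomials are orthogonal on [-1,1] with weight (1-x²)^{λ-1/2}: ∫_{-1}^{1} C^λ_m(x) C^λ_n(x) (1-x²)^{λ-1/2} dx = δ_{mn} · π · 2^{1-2λ} Γ(n+2λ) / (n! (n+λ) Γ(λ)²). -/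
open Finset

open MeasureTheory in
lemma geg_beta_aux (lam : ℝ) (hlam : 0 < lam) :
    IntervalIntegrable (fun x : ℝ => (x * (1 - x)) ^ (lam - 1 / 2)) volume 0 1 ∧
    ∫ x in (0:ℝ)..1, (x * (1 - x)) ^ (lam - 1 / 2) =
      Real.Gamma (lam + 1/2) * Real.Gamma (lam + 1/2) / Real.Gamma (2 * lam + 1) := by
  have hu : 0 < lam + 1/2 := by linarith
  have key : ∀ x ∈ Set.uIcc (0:ℝ) 1,
      (x : ℂ) ^ (((lam + 1/2 : ℝ) : ℂ) - 1) * (1 - (x : ℂ)) ^ (((lam + 1/2 : ℝ) : ℂ) - 1)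
        = (((x * (1 - x)) ^ (lam - 1 / 2) : ℝ) : ℂ) := by
    intro x hx
    rw [Set.uIcc_of_le zero_le_one] at hx
    have h0 := hx.1
    have h1 : 0 ≤ 1 - x := by linarith [hx.2]
    have e : ((lam + 1/2 : ℝ) : ℂ) - 1 = ((lam - 1/2 : ℝ) : ℂ) := by push_cast; ring
    rw [e, Real.mul_rpow h0 h1, Complex.ofReal_mul, Complex.ofReal_cpow h0,
      Complex.ofReal_cpow h1]
    push_cast
    rfl
  have hre : 0 < (((lam + 1/2 : ℝ) : ℂ)).re := by simpa using hu
  constructor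
  · have h := Complex.betaIntegral_convergent hre hre
    have h2 : IntervalIntegrable
        (fun x : ℝ => (((x * (1 - x)) ^ (lam - 1 / 2) : ℝ) : ℂ)) volume 0 1 :=
      h.congr (fun x hx => key x (Set.uIoc_subset_uIcc hx))
    rw [intervalIntegrable_iff] at h2 ⊢
    exact h2.re
  · have h := Complex.betaIntegral_eq_Gamma_mul_div _ _ hre hre
    rw [Complex.betaIntegral, intervalIntegral.integral_congr key,
      intervalIntegral.integral_ofReal, ← Complex.ofReal_add, Complex.Gamma_ofReal,
      Complex.Gamma_ofReal] at h
    have e : lam + 1/2 + (lam + 1/2) = 2 * lam + 1 := by ring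
    rw [e] at h
    exact_mod_cast h

lemma geg_w_eq (lam : ℝ) (x : ℝ) (hx : x ∈ Set.uIcc (-1:ℝ) 1) :
    (1 - x ^ 2) ^ (lam - 1 / 2) = (4:ℝ) ^ (lam - 1/2) *
      ((1/2 * x + 1/2) * (1 - (1/2 * x + 1/2))) ^ (lam - 1 / 2) := by
  rw [Set.uIcc_of_le (by norm_num)] at hx
  rw [← Real.mul_rpow (by norm_num) (by nlinarith [hx.1, hx.2])]
  congr 1
  ring

open MeasureTheory in
lemma geg_w_int (lam : ℝ) (hlam : 0 < lam) :
    IntervalIntegrable (fun x : ℝ => (1 - x ^ 2) ^ (lam - 1 / 2)) volume (-1) 1 := by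
  have h := (((geg_beta_aux lam hlam).1.comp_add_right (1/2)).comp_mul_left (c := 1/2)).const_mul
    ((4:ℝ) ^ (lam - 1/2))
  norm_num only at h
  refine h.congr ?_
  intro x hx
  have := geg_w_eq lam x (Set.uIoc_subset_uIcc hx)
  norm_num only at this ⊢
  exact this.symm

lemma geg_mass (lam : ℝ) (hlam : 0 < lam) :
    ∫ x in (-1:ℝ)..1, (1 - x ^ 2) ^ (lam - 1 / 2) =
      Real.pi * (2 : ℝ) ^ (1 - 2 * lam) * Real.Gamma (2 * lam) / (lam * Real.Gamma lam ^ 2) := by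
  rw [intervalIntegral.integral_congr (geg_w_eq lam), intervalIntegral.integral_const_mul,
    intervalIntegral.integral_comp_mul_add
      (fun x : ℝ => (x * (1 - x)) ^ (lam - 1 / 2)) (by norm_num : (1/2:ℝ) ≠ 0)]
  norm_num only
  have h2 := (geg_beta_aux lam hlam).2
  have hd := Real.Gamma_mul_Gamma_add_half lam
  rw [Real.Gamma_add_one (by positivity)] at h2
  norm_num only at h2 hd
  rw [h2]
  have hg : Real.Gamma lam ≠ 0 := (Real.Gamma_pos_of_pos hlam).ne'
  have hg2 : Real.Gamma (2 * lam) ≠ 0 := (Real.Gamma_pos_of_pos (by linarith)).ne'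
  have hh : Real.Gamma (lam + 1/2) =
      Real.Gamma (2*lam) * 2 ^ (1 - 2 * lam) * √Real.pi / Real.Gamma lam := by
    rw [← hd, mul_div_cancel_left₀ _ hg]
  norm_num only at hh
  rw [hh]
  have e4 : (4:ℝ) ^ (lam - 1/2) * 2 ^ (1 - 2 * lam) = 1 := by
    rw [show (4:ℝ) = 2 ^ (2:ℝ) by norm_num, ← Real.rpow_mul (by norm_num),
      ← Real.rpow_add (by norm_num), show 2 * (lam - 1/2) + (1 - 2 * lam) = 0 by ring,
      Real.rpow_zero]
  norm_num only at e4
  have hs : √Real.pi * √Real.pi = Real.pi := Real.mul_self_sqrt Real.pi_pos.le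
  rw [smul_eq_mul]
  have hl := hlam.ne'
  generalize (2:ℝ) ^ (1 - 2 * lam) = P at *
  generalize (4:ℝ) ^ (lam - 1/2) = Q at *
  generalize √Real.pi = S at *
  field_simp
  linear_combination P * S ^ 2 * e4 + P * hs

noncomputable def gegL (lam : ℝ) (f : ℝ → ℝ) : ℝ :=
  ∫ x in (-1:ℝ)..1, f x * (1 - x ^ 2) ^ (lam - 1 / 2)

open MeasureTheory in
lemma gegL_int (lam : ℝ) (hlam : 0 < lam) {f : ℝ → ℝ} (hf : Continuous f) :
    IntervalIntegrable (fun x : ℝ => f x * (1 - x ^ 2) ^ (lam - 1 / 2)) volume (-1) 1 :=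
  (geg_w_int lam hlam).continuousOn_mul hf.continuousOn

lemma gegL_add (lam : ℝ) (hlam : 0 < lam) {f g : ℝ → ℝ} (hf : Continuous f) (hg : Continuous g)
    (a b : ℝ) :
    gegL lam (fun x => a * f x + b * g x) = a * gegL lam f + b * gegL lam g := by
  unfold gegL
  rw [← intervalIntegral.integral_const_mul, ← intervalIntegral.integral_const_mul,
    ← intervalIntegral.integral_add ((gegL_int lam hlam hf).const_mul a)
      ((gegL_int lam hlam hg).const_mul b)]
  congr 1
  ext x
  ring

lemma gegL_sum (lam : ℝ) (hlam : 0 < lam) (N : ℕ) (a : ℕ → ℝ) (f : ℕ → ℝ → ℝ)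
    (hf : ∀ k, Continuous (f k)) :
    gegL lam (fun x => ∑ k ∈ Finset.range N, a k * f k x) =
      ∑ k ∈ Finset.range N, a k * gegL lam (f k) := by
  unfold gegL
  simp_rw [← intervalIntegral.integral_const_mul]
  rw [← intervalIntegral.integral_finsetSum
    (fun k _ => (gegL_int lam hlam (hf k)).const_mul (a k))]
  congr 1
  ext x
  rw [Finset.sum_mul]
  exact Finset.sum_congr rfl (fun k _ => by ring)

lemma geg_ftc (lam : ℝ) (hlam : 0 < lam) (p p' : ℝ → ℝ) (hp : ∀ x, HasDerivAt p (p' x) x)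
    (hp' : Continuous p') :
    gegL lam (fun x => p' x * (1 - x ^ 2) - (2 * lam + 1) * x * p x) = 0 := by
  have hpc : Continuous p := continuous_iff_continuousAt.2 fun x => (hp x).continuousAt
  unfold gegL
  have := intervalIntegral.integral_eq_sub_of_hasDerivAt_of_le (a := (-1:ℝ)) (b := 1)
    (f := fun x => p x * (1 - x ^ 2) ^ (lam + 1 / 2))
    (f' := fun x => (p' x * (1 - x ^ 2) - (2 * lam + 1) * x * p x) *
      (1 - x ^ 2) ^ (lam - 1 / 2)) (by norm_num) ?_ ?_ (gegL_int lam hlam (by fun_prop))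
  · rw [this]
    have : lam + 1 / 2 ≠ 0 := by positivity
    norm_num only
    rw [Real.zero_rpow (by norm_num only at this; exact this)]
    ring
  · apply Continuous.continuousOn
    apply hpc.mul
    exact Continuous.rpow_const (by fun_prop) (fun x => Or.inr (by positivity))
  · intro x hx
    have hpos : 0 < 1 - x ^ 2 := by nlinarith [hx.1, hx.2]
    have h1 : HasDerivAt (fun x : ℝ => 1 - x ^ 2) (-(2 * x)) x := by
      simpa using (hasDerivAt_pow 2 x).const_sub 1
    have h2 := (hp x).mul (h1.rpow_const (p := lam + 1/2) (Or.inl hpos.ne'))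
    convert! h2 using 1
    have e : (1 - x ^ 2) ^ (lam + 1/2) = (1 - x ^ 2) ^ (lam - 1/2) * (1 - x ^ 2) := by
      rw [← Real.rpow_add_one hpos.ne']; congr 1; ring
    rw [e, show lam + 1/2 - 1 = lam - 1/2 by ring]
    ring

lemma geg_moment (lam : ℝ) (hlam : 0 < lam) (j : ℕ) :
    (j * (j - 1) : ℝ) * gegL lam (fun x => x ^ (j - 2)) =
      j * (j + 2 * lam) * gegL lam (fun x => x ^ j) := by
  rcases j with _ | _ | j
  · simp
  · have := geg_ftc lam hlam (fun _ => 1) (fun _ => 0) (fun x => hasDerivAt_const x 1)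
      continuous_const
    have h2 := gegL_add lam hlam (f := fun x => x ^ 1) (g := fun _ => 0) (by fun_prop)
      (by fun_prop) (-(2 * lam + 1)) 0
    have h3 : gegL lam (fun x => x ^ 1) = 0 := by
      have : -(2 * lam + 1) * gegL lam (fun x => x ^ 1) = 0 := by
        rw [← this, ← add_zero (_ * _)]
        convert! h2.symm using 2
        · ring
        · ext x; ring
      rcases mul_eq_zero.1 this with h | h
      · linarith
      · exact h
    simp only [zero_add]
    rw [h3]; simp
  · have := geg_ftc lam hlam (fun x => x ^ (j + 1)) (fun x => (j + 1) * x ^ j)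
      (fun x => by simpa using hasDerivAt_pow (j + 1) x) (by fun_prop)
    have h2 := gegL_add lam hlam (f := fun x => x ^ j) (g := fun x => x ^ (j + 2)) (by fun_prop)
      (by fun_prop) (j + 1) (-(2 * lam + j + 2))
    have h3 : (j + 1) * gegL lam (fun x => x ^ j) +
        (-(2 * lam + j + 2)) * gegL lam (fun x => x ^ (j + 2)) = 0 := by
      rw [← h2, ← this]; congr 1; ext x; ring
    push_cast
    simp only [add_assoc, one_add_one_eq_two, Nat.add_sub_cancel]
    linear_combination (j + 2 : ℝ) * h3
noncomputable def gegc (lam : ℝ) (n k : ℕ) : ℝ :=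
  if 2 * k ≤ n then
    (-1 : ℝ) ^ k * Real.Gamma (lam + n - k) /
      (Real.Gamma lam * k.factorial * (n - 2 * k).factorial) * 2 ^ (n - 2 * k)
  else 0

lemma gegc_zero (lam : ℝ) {n k : ℕ} (h : n < 2 * k) : gegc lam n k = 0 := by
  rw [gegc, if_neg (by omega)]

lemma gegc_eq (lam : ℝ) (k r : ℕ) : gegc lam (2 * k + r) k =
    (-1 : ℝ) ^ k * Real.Gamma (lam + k + r) /
      (Real.Gamma lam * k.factorial * r.factorial) * 2 ^ r := by
  rw [gegc, if_pos (by omega)]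
  simp only [Nat.add_sub_cancel_left]
  congr 4
  push_cast
  ring

lemma geg_eq (lam : ℝ) (n N : ℕ) (hN : n < 2 * N) (x : ℝ) :
    gegenbauer lam n x = ∑ k ∈ Finset.range N, gegc lam n k * x ^ (n - 2 * k) := by
  rw [gegenbauer]
  have : Finset.range (n / 2 + 1) ⊆ Finset.range N := by
    intro k; simp only [Finset.mem_range]; omega
  rw [← Finset.sum_subset this]
  · apply Finset.sum_congr rfl
    intro k hk
    rw [Finset.mem_range] at hk
    rw [gegc, if_pos (by omega), mul_pow]
    ring
  · intro k _ hk
    rw [Finset.mem_range] at hk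
    rw [gegc_zero lam (by omega), zero_mul]

lemma geg_cont (lam : ℝ) (n : ℕ) : Continuous (gegenbauer lam n) := by
  unfold gegenbauer
  fun_prop

lemma gegc_ode (lam : ℝ) (hlam : 0 < lam) (n k : ℕ) :
    4 * (k + 1) * (lam + n - k - 1) * gegc lam n (k + 1) =
      - (((n - 2 * k : ℕ) : ℝ) * ((n - 2 * k : ℕ) - 1)) * gegc lam n k := by
  rcases lt_or_ge n (2 * (k + 1)) with h | h
  · rw [gegc_zero lam h, mul_zero]
    rcases (by omega : n - 2 * k = 0 ∨ n - 2 * k = 1) with h | h <;> simp [h]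
  · obtain ⟨r, rfl⟩ := Nat.exists_eq_add_of_le h
    have hg : Real.Gamma lam ≠ 0 := (Real.Gamma_pos_of_pos hlam).ne'
    have e : 2 * (k + 1) + r - 2 * k = r + 2 := by omega
    rw [gegc_eq, e, show 2 * (k + 1) + r = 2 * k + (r + 2) by ring, gegc_eq,
      Nat.factorial_succ (r + 1), Nat.factorial_succ r, Nat.factorial_succ k]
    push_cast
    rw [show lam + k + (r + 2) = lam + (k + 1) + r + 1 by ring,
      Real.Gamma_add_one (by positivity)]
    have : (k.factorial : ℝ) ≠ 0 := by positivity
    have : (r.factorial : ℝ) ≠ 0 := by positivity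
    field_simp
    ring

lemma gegc_rec0 (lam : ℝ) (hlam : 0 < lam) (n : ℕ) :
    (n + 1) * gegc lam (n + 1) 0 = 2 * (n + lam) * gegc lam n 0 := by
  have hg : Real.Gamma lam ≠ 0 := (Real.Gamma_pos_of_pos hlam).ne'
  have h1 := gegc_eq lam 0 n
  have h2 := gegc_eq lam 0 (n + 1)
  simp only [mul_zero, zero_add] at h1 h2
  rw [h1, h2, Nat.factorial_succ]
  push_cast
  rw [show lam + 0 + (n + 1) = lam + 0 + n + 1 by ring, Real.Gamma_add_one (by positivity)]
  have : (n.factorial : ℝ) ≠ 0 := by positivity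
  field_simp
  ring

lemma gegc_rec (lam : ℝ) (hlam : 0 < lam) (n k : ℕ) :
    (n + 2) * gegc lam (n + 2) (k + 1) =
      2 * (n + 1 + lam) * gegc lam (n + 1) (k + 1) - (n + 2 * lam) * gegc lam n k := by
  have hg : Real.Gamma lam ≠ 0 := (Real.Gamma_pos_of_pos hlam).ne'
  have hk : (k.factorial : ℝ) ≠ 0 := by positivity
  rcases lt_trichotomy n (2 * k) with h | rfl | h
  · rw [gegc_zero lam h, gegc_zero lam (by omega), gegc_zero lam (by omega)]; ring
  · have h1 := gegc_eq lam k 0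
    have h2 := gegc_eq lam (k + 1) 0
    rw [gegc_zero lam (by omega : 2 * k + 1 < 2 * (k + 1)), show 2 * k + 2 = 2 * (k + 1) + 0 by ring,
      h2]
    simp only [add_zero] at h1
    rw [h1, Nat.factorial_succ]
    push_cast
    rw [show lam + (k + 1) + 0 = lam + k + 0 + 1 by ring, Real.Gamma_add_one (by positivity)]
    field_simp
    ring
  · obtain ⟨r, rfl⟩ := Nat.exists_eq_add_of_lt h
    have hr : (r.factorial : ℝ) ≠ 0 := by positivity
    rw [show 2 * k + r + 1 + 2 = 2 * (k + 1) + (r + 1) by ring, gegc_eq,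
      show 2 * k + r + 1 + 1 = 2 * (k + 1) + r by ring, gegc_eq,
      show 2 * k + r + 1 = 2 * k + (r + 1) by ring, gegc_eq,
      Nat.factorial_succ, Nat.factorial_succ]
    push_cast
    rw [show lam + (k + 1) + (r + 1) = lam + k + r + 1 + 1 by ring,
      show lam + (k + 1) + r = lam + k + r + 1 by ring,
      show lam + k + (r + 1) = lam + k + r + 1 by ring,
      Real.Gamma_add_one (s := lam + k + r + 1) (by positivity)]
    field_simp
    ring

lemma geg_zero (lam : ℝ) (hlam : 0 < lam) (x : ℝ) : gegenbauer lam 0 x = 1 := by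
  have hg : Real.Gamma lam ≠ 0 := (Real.Gamma_pos_of_pos hlam).ne'
  simp [gegenbauer, hg]

lemma geg_one (lam : ℝ) (hlam : 0 < lam) (x : ℝ) : gegenbauer lam 1 x = 2 * lam * x := by
  have hg : Real.Gamma lam ≠ 0 := (Real.Gamma_pos_of_pos hlam).ne'
  simp [gegenbauer, Real.Gamma_add_one hlam.ne']
  field_simp

lemma geg_rec (lam : ℝ) (hlam : 0 < lam) (n : ℕ) (x : ℝ) :
    (n + 2) * gegenbauer lam (n + 2) x =
      2 * (n + 1 + lam) * (x * gegenbauer lam (n + 1) x)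
        - (n + 2 * lam) * gegenbauer lam n x := by
  rw [geg_eq lam (n + 2) (n + 2 + 1) (by omega), geg_eq lam (n + 1) (n + 2 + 1) (by omega),
    geg_eq lam n (n + 2) (by omega), Finset.sum_range_succ', Finset.sum_range_succ' (n := n + 2)]
  simp only [Finset.mul_sum, mul_add]
  have h0 := gegc_rec0 lam hlam (n + 1)
  push_cast at h0
  have h1 : ∑ i ∈ Finset.range (n + 2),
      (n + 2 : ℝ) * (gegc lam (n + 2) (i + 1) * x ^ (n + 2 - (2 * i + 2))) =
      ∑ i ∈ Finset.range (n + 2), (2 * (n + 1 + lam) *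
          (x * (gegc lam (n + 1) (i + 1) * x ^ (n + 1 - (2 * i + 2))))
        - (n + 2 * lam) * (gegc lam n i * x ^ (n - 2 * i))) := by
    apply Finset.sum_congr rfl
    intro k _
    have hr := gegc_rec lam hlam n k
    rw [show n + 2 - (2 * k + 2) = n - 2 * k by omega]
    have hx : gegc lam (n + 1) (k + 1) * x ^ (n - 2 * k) =
        x * (gegc lam (n + 1) (k + 1) * x ^ (n + 1 - (2 * k + 2))) := by
      rcases lt_or_ge (n + 1) (2 * (k + 1)) with h | h
      · rw [gegc_zero lam h]; ring
      · rw [show n - 2 * k = n + 1 - (2 * k + 2) + 1 by omega, pow_succ]; ring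
    linear_combination x ^ (n - 2 * k) * hr + 2 * (n + 1 + lam) * hx
  rw [Finset.sum_sub_distrib] at h1
  simp only [mul_one, mul_zero, Nat.sub_zero, ← mul_add] at h1 ⊢
  simp only [mul_add, Finset.mul_sum, mul_one] at h1 ⊢
  rw [pow_succ x (n + 1)]
  linear_combination h1 + x ^ (n + 2) * h0

lemma geg_mean (lam : ℝ) (hlam : 0 < lam) (n : ℕ) :
    gegL lam (gegenbauer lam (n + 1)) = 0 := by
  have h : gegenbauer lam (n + 1) = fun x => ∑ k ∈ Finset.range (n + 1),
      gegc lam (n + 1) k * x ^ (n + 1 - 2 * k) := by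
    ext x; exact geg_eq lam _ _ (by omega) x
  rw [h, gegL_sum lam hlam _ _ (fun k x => x ^ (n + 1 - 2 * k)) (fun k => by fun_prop)]
  have tel : ∀ N : ℕ, ((n + 1 : ℕ) : ℝ) * ((n + 1 : ℕ) + 2 * lam) * ∑ k ∈ Finset.range N,
      gegc lam (n + 1) k * gegL lam (fun x => x ^ (n + 1 - 2 * k)) =
      - (4 * N * (lam + (n + 1 : ℕ) - N)) * (gegc lam (n + 1) N *
        gegL lam (fun x => x ^ (n + 1 - 2 * N))) := by
    intro N
    induction N with
    | zero => simp
    | succ N ih =>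
      rw [Finset.sum_range_succ, mul_add, ih]
      have hc := gegc_ode lam hlam (n + 1) N
      have hm := geg_moment lam hlam (n + 1 - 2 * N)
      rw [show n + 1 - 2 * N - 2 = n + 1 - 2 * (N + 1) by omega] at hm
      rcases lt_or_ge (n + 1) (2 * N) with h | h
      · rw [gegc_zero lam h, gegc_zero lam (by omega)]; ring
      · rw [Nat.cast_sub h] at hc hm
        push_cast at hc hm ⊢
        generalize gegL lam (fun x => x ^ (n + 1 - 2 * N)) = A at *
        generalize gegL lam (fun x => x ^ (n + 1 - 2 * (N + 1))) = B at *
        linear_combination (B) * hc - gegc lam (n + 1) N * hm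
  have := tel (n + 1)
  rw [gegc_zero lam (by omega : n + 1 < 2 * (n + 1)), zero_mul, mul_zero] at this
  exact (mul_eq_zero.1 this).resolve_left (by positivity)
noncomputable def gegh (lam : ℝ) (n : ℕ) : ℝ :=
  Real.pi * (2 : ℝ) ^ (1 - 2 * lam) * Real.Gamma ((n : ℝ) + 2 * lam) /
          (n.factorial * ((n : ℝ) + lam) * Real.Gamma lam ^ 2)

lemma gegh_succ (lam : ℝ) (hlam : 0 < lam) (n : ℕ) :
    (n + 1) * (n + 1 + lam) * gegh lam (n + 1) = (n + lam) * (n + 2 * lam) * gegh lam n := by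
  have hg : Real.Gamma lam ≠ 0 := (Real.Gamma_pos_of_pos hlam).ne'
  have hk : (n.factorial : ℝ) ≠ 0 := by positivity
  have h1 : (n + 1 + lam : ℝ) ≠ 0 := by positivity
  have h2 : (n + lam : ℝ) ≠ 0 := by positivity
  unfold gegh
  rw [Nat.factorial_succ]
  push_cast
  rw [show (n + 1 + 2 * lam : ℝ) = n + 2 * lam + 1 by ring, Real.Gamma_add_one (by positivity)]
  field_simp

lemma geg_main (lam : ℝ) (hlam : 0 < lam) (m : ℕ) : ∀ n : ℕ,
    gegL lam (fun x => gegenbauer lam m x * gegenbauer lam n x) =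
      if m = n then gegh lam n else 0 := by
  set h : ℕ → ℕ → ℝ := fun m n =>
    gegL lam (fun x => gegenbauer lam m x * gegenbauer lam n x) with hh
  set X : ℕ → ℕ → ℝ := fun m n =>
    gegL lam (fun x => x * gegenbauer lam m x * gegenbauer lam n x) with hX
  have cont := geg_cont lam
  have hsymm : ∀ m n, h m n = h n m := by
    intro m n; simp only [hh]; congr 1; ext x; ring
  have Xsymm : ∀ m n, X m n = X n m := by
    intro m n; simp only [hX]; congr 1; ext x; ring
  have smul : ∀ (a : ℝ) {f : ℝ → ℝ}, Continuous f →
      gegL lam (fun x => a * f x) = a * gegL lam f := by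
    intro a f hf
    have := gegL_add lam hlam hf hf a 0
    simpa using this
  have rec1 : ∀ n, h 1 n = 2 * lam * X 0 n := by
    intro n
    have c0 := cont 0
    have c1 := cont n
    simp only [hh, hX]
    rw [← smul _ (by fun_prop)]
    congr 1; ext x
    rw [geg_one lam hlam, geg_zero lam hlam]; ring
  have rec2 : ∀ m n, (m + 2) * h (m + 2) n =
      2 * (m + 1 + lam) * X (m + 1) n - (m + 2 * lam) * h m n := by
    intro m n
    have c0 := cont m
    have c1 := cont n
    have c2 := cont (m + 1)
    have c3 := cont (m + 2)
    simp only [hh, hX]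
    rw [← smul _ (by fun_prop), sub_eq_add_neg, ← neg_mul,
      ← gegL_add lam hlam (by fun_prop) (by fun_prop)]
    congr 1; ext x
    linear_combination gegenbauer lam n x * geg_rec lam hlam m x
  have h00 : h 0 0 = gegh lam 0 := by
    simp only [hh, geg_zero lam hlam, gegL, gegh]
    simp only [mul_one, one_mul, geg_mass lam hlam]
    simp
  have h0 : ∀ n, h 0 n = if 0 = n then gegh lam n else 0 := by
    intro n
    rcases n with _ | n
    · simpa using h00
    · simp only [hh, geg_zero lam hlam, one_mul]
      rw [if_neg (by omega)]
      exact geg_mean lam hlam n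
  have step : ∀ m, (∀ n, h m n = if m = n then gegh lam n else 0) → ∀ n,
      2 * (n + 1 + lam) * X m (n + 1) = (n + 2) * (if m = n + 2 then gegh lam (n + 2) else 0)
        + (n + 2 * lam) * (if m = n then gegh lam n else 0) := by
    intro m hm n
    have := rec2 n m
    rw [hsymm, hsymm n, hm, hm, Xsymm] at this
    linarith
  have h1 : ∀ n, h 1 n = if 1 = n then gegh lam n else 0 := by
    intro n
    rcases n with _ | n
    · rw [hsymm, h0]; simp
    · have s := step 0 h0 n
      have r := rec1 (n + 1)
      rcases n with _ | n
      · have g := gegh_succ lam hlam 0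
        simp at s g r ⊢
        rw [r]
        apply mul_left_cancel₀ (by positivity : 1 + lam ≠ 0)
        linear_combination lam * s - g
      · simp at s ⊢
        rw [r, s.resolve_left (by positivity)]; simp
  show ∀ n, h m n = if m = n then gegh lam n else 0
  have both : (∀ n, h m n = if m = n then gegh lam n else 0) ∧
      (∀ n, h (m + 1) n = if m + 1 = n then gegh lam n else 0) := by
    induction m with
    | zero => exact ⟨h0, h1⟩
    | succ m ih =>
      refine ⟨ih.2, ?_⟩
      intro n
      rcases n with _ | n
      · rw [hsymm, h0, if_neg (by omega), if_neg (by omega)]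
      · have s := step (m + 1) ih.2 n
        have r := rec2 m (n + 1)
        rw [ih.1] at r
        apply mul_left_cancel₀ (by positivity : (n + 1 + lam) * ((m : ℝ) + 2) ≠ 0)
        by_cases c1 : m = n + 1
        · subst c1
          have g := gegh_succ lam hlam (n + 1)
          rw [if_pos (by omega), if_neg (by omega)] at s
          rw [if_pos (by omega)] at r
          rw [if_neg (by omega)]
          push_cast at s r g ⊢
          linear_combination (n + 1 + lam) * r + (n + 1 + 1 + lam) * s + g
        · by_cases c2 : m + 1 = n
          · subst c2
            have g := gegh_succ lam hlam (m + 1)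
            rw [if_neg (by omega), if_pos (by omega)] at s
            rw [if_neg (by omega)] at r
            rw [if_pos (by omega)]
            push_cast at s r g ⊢
            linear_combination (m + 1 + 1 + lam) * r + (m + 1 + lam) * s - g
          · rw [if_neg (by omega), if_neg (by omega)] at s
            rw [if_neg (by omega)] at r ⊢
            linear_combination (n + 1 + lam) * r + (m + 1 + lam) * s
  exact both.1
theorem stmt7 (lam : ℝ) (hlam : 0 < lam) (m n : ℕ) :
    ∫ x in (-1 : ℝ)..1,
        gegenbauer lam m x * gegenbauer lam n x * (1 - x ^ 2) ^ (lam - 1 / 2) =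
      if m = n then
        Real.pi * (2 : ℝ) ^ (1 - 2 * lam) * Real.Gamma ((n : ℝ) + 2 * lam) /
          (n.factorial * ((n : ℝ) + lam) * Real.Gamma lam ^ 2)
      else 0 := by
  exact geg_main lam hlam m n
end
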